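/- Suppose Λ ⊆ ℕ satisfies d̄_Φ(Λ) > 0 for some multiplicative Følner sequence Φ. Then liminf_{N→∞} (1/(log N)²) ∑_{m,n=1}^{N} (1/(mn)) · d̄_Φ( (n² + n)⁻¹Λ ∩ (m²)⁻¹Λ ) > 0. -/

import Mathlib

open Filter

/-- `Φ` is a multiplicative Følner sequence in `ℕ = {1, 2, …}`: a sequence of finite
nonempty sets of positive integers which is asymptotically invariant under dilation. -/
def IsMulFolner (Φ : ℕ → Finset ℕ) : Prop :=
  (∀ K, (Φ K).Nonempty) ∧ (∀ K, ∀ n ∈ Φ K, 0 < n) ∧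
    ∀ x : ℕ, 0 < x →
      Tendsto (fun K => ((Φ K ∩ (Φ K).image (fun n => x * n)).card : ℝ) / ((Φ K).card : ℝ))
        atTop (nhds 1)

-- The upper multiplicative density of `Λ` with respect to the sequence `Φ`.
open scoped Classical in
noncomputable def upMulDens (Φ : ℕ → Finset ℕ) (Λ : Set ℕ) : ℝ :=
  limsup (fun K => (((Φ K).filter (fun n => n ∈ Λ)).card : ℝ) / ((Φ K).card : ℝ)) atTop


namespace LogAvg

/-- average over a finite set -/
noncomputable def avg (Φ : ℕ → Finset ℕ) (u : ℕ → ℝ) (K : ℕ) : ℝ :=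
  (∑ x ∈ Φ K, u x) / ((Φ K).card : ℝ)

/-- abstract invariant mean -/
structure IsMean (M : (ℕ → ℝ) →ₗ[ℝ] ℝ) : Prop where
  one : M (fun _ => 1) = 1
  nonneg : ∀ (u : ℕ → ℝ) (B : ℝ), (∀ x, 0 ≤ u x) → (∀ x, u x ≤ B) → 0 ≤ M u
  inv : ∀ (a : ℕ), 0 < a → ∀ (u : ℕ → ℝ) (B : ℝ), (∀ x, |u x| ≤ B) →
    M (fun x => u (a * x)) = M u

lemma exists_lim (Φ : ℕ → Finset ℕ) (U : Ultrafilter ℕ) :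
    ∃ M : (ℕ → ℝ) →ₗ[ℝ] ℝ, ∀ u l, Tendsto (avg Φ u) U (nhds l) → M u = l := by
  let V : Submodule ℝ (ℕ → ℝ) :=
    { carrier := {u | ∃ l, Tendsto (avg Φ u) U (nhds l)}
      add_mem' := by
        rintro u v ⟨l, hl⟩ ⟨k, hk⟩
        refine ⟨l + k, (hl.add hk).congr fun K => ?_⟩
        simp [avg, Finset.sum_add_distrib, add_div]
      zero_mem' := ⟨0, tendsto_const_nhds.congr fun K => by simp [avg]⟩
      smul_mem' := by
        rintro c u ⟨l, hl⟩
        refine ⟨c * l, (hl.const_mul c).congr fun K => ?_⟩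
        simp [avg, ← Finset.mul_sum, mul_div_assoc] }
  let f : V →ₗ[ℝ] ℝ :=
    { toFun := fun u => u.2.choose
      map_add' := by
        intro u v
        refine tendsto_nhds_unique (u + v).2.choose_spec
          ((u.2.choose_spec.add v.2.choose_spec).congr fun K => ?_)
        simp [avg, Finset.sum_add_distrib, add_div]
      map_smul' := by
        intro c u
        refine tendsto_nhds_unique (c • u).2.choose_spec
          ((u.2.choose_spec.const_mul c).congr fun K => ?_)
        simp [avg, ← Finset.mul_sum, mul_div_assoc] }
  obtain ⟨g, hg⟩ := f.exists_extend
  refine ⟨g, fun u l hl => ?_⟩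
  have hu : u ∈ V := ⟨l, hl⟩
  have h1 : g u = f ⟨u, hu⟩ := by rw [← hg]; rfl
  rw [h1]
  exact tendsto_nhds_unique (show u ∈ V from hu).choose_spec hl

lemma avg_abs_le {Φ : ℕ → Finset ℕ} {u : ℕ → ℝ} {B : ℝ} (hne : ∀ K, (Φ K).Nonempty)
    (h : ∀ x, |u x| ≤ B) (K : ℕ) : |avg Φ u K| ≤ B := by
  have hc : (0 : ℝ) < (Φ K).card := by exact_mod_cast (hne K).card_pos
  rw [avg, abs_div, abs_of_pos hc, div_le_iff₀ hc]
  calc _ ≤ ∑ x ∈ Φ K, |u x| := Finset.abs_sum_le_sum_abs _ _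
    _ ≤ ∑ x ∈ Φ K, B := Finset.sum_le_sum fun x _ => h x
    _ = _ := by simp [mul_comm]

lemma avg_inv {Φ : ℕ → Finset ℕ} (hΦ : IsMulFolner Φ) {u : ℕ → ℝ} {B : ℝ}
    (h : ∀ x, |u x| ≤ B) {a : ℕ} (ha : 0 < a) :
    Tendsto (fun K => avg Φ (fun x => u (a * x)) K - avg Φ u K) atTop (nhds 0) := by
  have h1 := hΦ.2.2 a ha
  have h2 : Tendsto (fun K => 2 * B * (1 - ((Φ K ∩ (Φ K).image (fun n => a * n)).card : ℝ)
      / ((Φ K).card : ℝ))) atTop (nhds 0) := by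
    have := (h1.const_sub 1).const_mul (2 * B)
    simpa using this
  refine squeeze_zero_norm (fun K => ?_) h2
  have hc : (0 : ℝ) < (Φ K).card := by exact_mod_cast (hΦ.1 K).card_pos
  set I := (Φ K).image (fun n => a * n) with hI
  have hinj : Function.Injective (fun n : ℕ => a * n) := fun x y hxy =>
    Nat.eq_of_mul_eq_mul_left ha hxy
  have hcard : I.card = (Φ K).card := Finset.card_image_of_injective _ hinj
  have hs : ∑ x ∈ Φ K, u (a * x) = ∑ x ∈ I, u x := by
    rw [hI, Finset.sum_image (fun x _ y _ hxy => hinj hxy)]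
  have e1 : ∑ x ∈ I, u x = ∑ x ∈ Φ K ∩ I, u x + ∑ x ∈ I \ Φ K, u x := by
    rw [Finset.inter_comm, Finset.sum_inter_add_sum_sdiff]
  have e2 : ∑ x ∈ Φ K, u x = ∑ x ∈ Φ K ∩ I, u x + ∑ x ∈ Φ K \ I, u x := by
    rw [Finset.sum_inter_add_sum_sdiff]
  have c1 : ((I \ Φ K).card : ℝ) = (Φ K).card - (Φ K ∩ I).card := by
    have := Finset.card_inter_add_card_sdiff I (Φ K)
    rw [Finset.inter_comm, hcard] at this
    rw [← this]; push_cast; ring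
  have c2 : ((Φ K \ I).card : ℝ) = (Φ K).card - (Φ K ∩ I).card := by
    have := Finset.card_inter_add_card_sdiff (Φ K) I
    rw [← this]; push_cast; ring
  have b : ∀ s : Finset ℕ, |∑ x ∈ s, u x| ≤ s.card * B := fun s =>
    (Finset.abs_sum_le_sum_abs _ _).trans
      ((Finset.sum_le_sum fun x _ => h x).trans (by simp))
  have b1 := abs_le.1 (b (I \ Φ K))
  have b2 := abs_le.1 (b (Φ K \ I))
  rw [c1] at b1
  rw [c2] at b2
  simp only [avg]
  rw [hs, e1, e2, ← sub_div, Real.norm_eq_abs, abs_div, abs_of_pos hc, div_le_iff₀ hc]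
  have : 2 * B * (1 - ((Φ K ∩ I).card : ℝ) / (Φ K).card) * (Φ K).card
    = 2 * B * ((Φ K).card - (Φ K ∩ I).card) := by field_simp
  rw [this, abs_le]
  constructor <;> linarith

lemma exists_mean {Φ : ℕ → Finset ℕ} (hΦ : IsMulFolner Φ) (Λ : Set ℕ)
    (hd : 0 < upMulDens Φ Λ) :
    ∃ M : (ℕ → ℝ) →ₗ[ℝ] ℝ, IsMean M ∧ 0 < M (Λ.indicator 1) ∧
      ∀ S : Set ℕ, M (S.indicator 1) ≤ upMulDens Φ S := by
  classical
  have hne := hΦ.1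
  have hb1 : ∀ (S : Set ℕ) x, |S.indicator (1 : ℕ → ℝ) x| ≤ 1 := by
    intro S x
    by_cases hx : x ∈ S <;> simp [hx]
  have hup : ∀ S : Set ℕ, upMulDens Φ S = limsup (avg Φ (S.indicator 1)) atTop := by
    intro S
    unfold upMulDens avg
    congr 1
    ext K
    congr 1
    simp [Set.indicator_apply, Finset.sum_ite]
  have hbd : ∀ S : Set ℕ, IsBoundedUnder (· ≤ ·) atTop (avg Φ (S.indicator 1)) := fun S =>
    isBoundedUnder_of ⟨1, fun K => (abs_le.1 (avg_abs_le hne (hb1 S) K)).2⟩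
  have hbd' : ∀ S : Set ℕ, IsCoboundedUnder (· ≤ ·) atTop (avg Φ (S.indicator 1)) := fun S =>
    (isBoundedUnder_of ⟨-1, fun K => (abs_le.1 (avg_abs_le hne (hb1 S) K)).1⟩ :
      IsBoundedUnder (· ≥ ·) atTop _).isCoboundedUnder_le
  set δ := upMulDens Φ Λ / 2 with hδ
  have hδ0 : 0 < δ := by positivity
  have hfr : ∃ᶠ K in atTop, δ < avg Φ (Λ.indicator 1) K :=
    frequently_lt_of_lt_limsup (hbd' Λ) (by rw [← hup]; linarith)
  haveI : (atTop ⊓ 𝓟 {K | δ < avg Φ (Λ.indicator 1) K}).NeBot :=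
    frequently_mem_iff_neBot.1 hfr
  let U := Ultrafilter.of (atTop ⊓ 𝓟 {K | δ < avg Φ (Λ.indicator 1) K})
  have hU : (U : Filter ℕ) ≤ _ := Ultrafilter.of_le _
  have hUt : (U : Filter ℕ) ≤ atTop := hU.trans inf_le_left
  have hUδ : ∀ᶠ K in U, δ < avg Φ (Λ.indicator 1) K :=
    (hU.trans inf_le_right) (mem_principal_self _)
  obtain ⟨M, hM⟩ := exists_lim Φ U
  have hT : ∀ (u : ℕ → ℝ) (B : ℝ), (∀ x, |u x| ≤ B) → Tendsto (avg Φ u) U (nhds (M u)) := by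
    intro u B h
    have : ∃ l, Tendsto (avg Φ u) U (nhds l) := by
      obtain ⟨l, _, hl⟩ := (isCompact_Icc (a := -B) (b := B)).ultrafilter_le_nhds
        (U.map (avg Φ u)) (by
          simp only [Ultrafilter.coe_map, le_principal_iff, mem_map]
          exact Filter.Eventually.of_forall fun K => abs_le.1 (avg_abs_le hne h K))
      exact ⟨l, hl⟩
    obtain ⟨l, hl⟩ := this
    rwa [hM u l hl]
  refine ⟨M, ⟨?_, ?_, ?_⟩, ?_, ?_⟩
  · refine hM _ _ (tendsto_const_nhds.congr fun K => ?_)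
    have hc : ((Φ K).card : ℝ) ≠ 0 := by exact_mod_cast (hne K).card_pos.ne'
    simp [avg, hc]
  · intro u B h0 hB
    refine ge_of_tendsto' (hT u B fun x => by rw [abs_of_nonneg (h0 x)]; exact hB x) fun K => ?_
    exact div_nonneg (Finset.sum_nonneg fun x _ => h0 x) (Nat.cast_nonneg _)
  · intro a ha u B h
    have h1 := hT (fun x => u (a * x)) B (fun x => h _)
    have h2 := hT u B h
    have h3 := tendsto_nhds_unique (h1.sub h2) ((avg_inv hΦ h ha).mono_left hUt)
    linarith
  · exact hδ0.trans_le (ge_of_tendsto (hT _ 1 (hb1 Λ)) (hUδ.mono fun K h => h.le))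
  · intro S
    refine le_of_forall_pos_le_add fun ε hε => ?_
    have : ∀ᶠ K in atTop, avg Φ (S.indicator 1) K < upMulDens Φ S + ε :=
      eventually_lt_of_limsup_lt (by rw [← hup]; linarith) (hbd S)
    exact le_of_tendsto (hT _ 1 (hb1 S)) ((this.filter_mono hUt).mono fun K h => le_of_lt h)

lemma upMulDens_nonneg_le {Φ : ℕ → Finset ℕ} (S : Set ℕ) :
    upMulDens Φ S ≤ 1 := by
  classical
  unfold upMulDens
  refine limsup_le_of_le ?_ (Eventually.of_forall fun K => ?_)
  · exact (isBoundedUnder_of ⟨0, fun K => by positivity⟩ :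
      IsBoundedUnder (· ≥ ·) atTop _).isCoboundedUnder_le
  · exact div_le_one_of_le₀ (by exact_mod_cast Finset.card_filter_le _ _) (Nat.cast_nonneg _)

/-- A finite set with the difference-divides property -/
lemma exists_diff_set (K : ℕ) : ∃ S : Finset ℕ, S.card = K ∧ (∀ a ∈ S, 0 < a) ∧
    ∀ a ∈ S, ∀ b ∈ S, b < a → (a - b) ∣ b := by
  classical
  induction K with
  | zero => exact ⟨∅, by simp⟩
  | succ K ih =>
    obtain ⟨S, hc, hp, hd⟩ := ih
    set m := S.sup id with hm
    have hle : ∀ a ∈ S, a ≤ m := fun a ha => Finset.le_sup (f := id) ha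
    have hdv : ∀ e, 0 < e → e ≤ m → e ∣ m.factorial := fun e h1 h2 => Nat.dvd_factorial h1 h2
    have hP := Nat.factorial_pos m
    set P := m.factorial
    refine ⟨insert P (S.image (fun s => P + s)), ?_, ?_, ?_⟩
    · rw [Finset.card_insert_of_notMem, Finset.card_image_of_injective _ (add_right_injective P), hc]
      intro h
      obtain ⟨s, hs, h⟩ := Finset.mem_image.1 h
      have := hp s hs
      omega
    · intro a ha
      rcases Finset.mem_insert.1 ha with rfl | ha
      · exact hP
      · obtain ⟨s, hs, rfl⟩ := Finset.mem_image.1 ha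
        omega
    · intro a ha b hb hab
      rcases Finset.mem_insert.1 ha with ha | ha <;> rcases Finset.mem_insert.1 hb with hb | hb
      · omega
      · obtain ⟨s, hs, rfl⟩ := Finset.mem_image.1 hb
        omega
      · obtain ⟨s, hs, rfl⟩ := Finset.mem_image.1 ha
        subst hb
        rw [Nat.add_sub_cancel_left]
        exact hdv s (hp s hs) (hle s hs)
      · obtain ⟨s, hs, rfl⟩ := Finset.mem_image.1 ha
        obtain ⟨r, hr, rfl⟩ := Finset.mem_image.1 hb
        rw [Nat.add_sub_add_left]
        have h1 : r < s := by omega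
        refine dvd_add (hdv _ (by omega) ((Nat.sub_le _ _).trans (hle s hs))) (hd s hs r hr h1)

section
variable {M : (ℕ → ℝ) →ₗ[ℝ] ℝ}

lemma mean_mono (hM : IsMean M) {u v : ℕ → ℝ} (B : ℝ) (h : ∀ x, u x ≤ v x)
    (hB : ∀ x, v x - u x ≤ B) : M u ≤ M v := by
  have := hM.nonneg (v - u) B (fun x => by simpa using h x) (fun x => by simpa using hB x)
  rw [map_sub] at this
  linarith

lemma mean_const (hM : IsMean M) (c : ℝ) : M (fun _ => c) = c := by
  have : (fun _ : ℕ => c) = c • (fun _ : ℕ => (1 : ℝ)) := by ext; simp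
  rw [this, map_smul, hM.one]; simp

lemma mean_cs (hM : IsMean M) {u v : ℕ → ℝ} {τ : ℝ} (hτ : 0 < τ) (hu : ∀ x, |u x| ≤ 1)
    (hv : ∀ x, |v x| ≤ 1) (h : M (fun x => v x ^ 2) ≤ τ ^ 2) : M (fun x => u x * v x) ≤ τ := by
  have key : M (fun x => u x * v x) ≤ M ((fun _ => τ / 2) + (1 / (2 * τ)) • (fun x => v x ^ 2)) := by
    refine mean_mono hM (τ / 2 + 1 / (2 * τ) + 1) (fun x => ?_) (fun x => ?_)
    · simp only [Pi.add_apply, Pi.smul_apply, smul_eq_mul]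
      have h1 : u x ^ 2 ≤ 1 := (sq_le_one_iff_abs_le_one _).2 (hu x)
      have h2 : τ / 2 + 1 / (2 * τ) * v x ^ 2 = (τ ^ 2 + v x ^ 2) / (2 * τ) := by field_simp
      rw [h2, le_div_iff₀ (by positivity)]
      nlinarith [sq_nonneg (τ * u x - v x), mul_le_mul_of_nonneg_left h1 (sq_nonneg τ)]
    · simp only [Pi.add_apply, Pi.smul_apply, smul_eq_mul]
      have h1 : v x ^ 2 ≤ 1 := (sq_le_one_iff_abs_le_one _).2 (hv x)
      have h2 : |u x * v x| ≤ 1 := by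
        rw [abs_mul]; exact mul_le_one₀ (hu x) (abs_nonneg _) (hv x)
      have h3 := (abs_le.1 h2).1
      have h4 : 1 / (2 * τ) * v x ^ 2 ≤ 1 / (2 * τ) := mul_le_of_le_one_right (by positivity) h1
      linarith
  rw [map_add, map_smul, mean_const hM, smul_eq_mul] at key
  have : 1 / (2 * τ) * M (fun x => v x ^ 2) ≤ 1 / (2 * τ) * τ ^ 2 :=
    mul_le_mul_of_nonneg_left h (by positivity)
  have h2 : 1 / (2 * τ) * τ ^ 2 = τ / 2 := by field_simp
  linarith

lemma mean_sq (hM : IsMean M) {u : ℕ → ℝ} {B : ℝ} (hu : ∀ x, |u x| ≤ B) :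
    M u ^ 2 ≤ M (fun x => u x ^ 2) := by
  have h := hM.nonneg (fun x => (u x - M u) ^ 2) ((B + |M u|) ^ 2) (fun x => sq_nonneg _)
    (fun x => by
      rw [← sq_abs]
      exact pow_le_pow_left₀ (abs_nonneg _) ((abs_sub _ _).trans (by linarith [hu x])) 2)
  have e : (fun x => (u x - M u) ^ 2) = (fun x => u x ^ 2) - (2 * M u) • u + (fun _ => M u ^ 2) := by
    ext x; simp; ring
  rw [e, map_add, map_sub, map_smul, mean_const hM, smul_eq_mul] at h
  nlinarith

/-- the set of square dilates of `f` -/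
def dil (f : ℕ → ℝ) : Set (ℕ → ℝ) := {w | ∃ r : ℕ, 0 < r ∧ w = fun x => f (r ^ 2 * x)}

lemma hull_ind {f : ℕ → ℝ} {P : Set (ℕ → ℝ)} (hP : Convex ℝ P)
    (h : ∀ r : ℕ, 0 < r → (fun x => f (r ^ 2 * x)) ∈ P) {w : ℕ → ℝ}
    (hw : w ∈ convexHull ℝ (dil f)) : w ∈ P :=
  convexHull_min (by rintro _ ⟨r, hr, rfl⟩; exact h r hr) hP hw

lemma hull_bound {f : ℕ → ℝ} (hf : ∀ x, 0 ≤ f x ∧ f x ≤ 1) {w : ℕ → ℝ}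
    (hw : w ∈ convexHull ℝ (dil f)) : ∀ x, 0 ≤ w x ∧ w x ≤ 1 := by
  refine hull_ind (P := {w | ∀ x, 0 ≤ w x ∧ w x ≤ 1}) ?_ (fun r _ x => hf _) hw
  intro u hu v hv a b ha hb hab x
  obtain ⟨h1, h2⟩ := hu x
  obtain ⟨h3, h4⟩ := hv x
  simp only [Pi.add_apply, Pi.smul_apply, smul_eq_mul]
  constructor
  · positivity
  · nlinarith

lemma hull_mean (hM : IsMean M) {f : ℕ → ℝ} (hf : ∀ x, 0 ≤ f x ∧ f x ≤ 1) {w : ℕ → ℝ}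
    (hw : w ∈ convexHull ℝ (dil f)) : M w = M f := by
  refine hull_ind (P := {w | M w = M f}) ?_ (fun r hr => ?_) hw
  · exact convex_hyperplane M.isLinear _
  · exact hM.inv (r ^ 2) (by positivity) f 1 (fun x => abs_le.2 ⟨by linarith [hf x], (hf x).2⟩)

lemma hull_dil {f : ℕ → ℝ} {k : ℕ} (hk : 0 < k) {w : ℕ → ℝ}
    (hw : w ∈ convexHull ℝ (dil f)) : (fun x => w (k ^ 2 * x)) ∈ convexHull ℝ (dil f) := by
  refine hull_ind (P := {w | (fun x => w (k ^ 2 * x)) ∈ convexHull ℝ (dil f)}) ?_ (fun r hr => ?_) hw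
  · intro u hu v hv a b ha hb hab
    exact (convex_convexHull ℝ (dil f)) hu hv ha hb hab
  · refine subset_convexHull ℝ _ ⟨r * k, by positivity, ?_⟩
    ext x; rw [mul_pow, mul_assoc]

lemma hull_le {f : ℕ → ℝ} (hf : ∀ x, 0 ≤ f x ∧ f x ≤ 1) {w : ℕ → ℝ}
    (hw : w ∈ convexHull ℝ (dil f)) :
    ∃ R : ℕ, 0 < R ∧ ∀ x, w x ≤ ∑ r ∈ Finset.Icc 1 R, f (r ^ 2 * x) := by
  refine hull_ind (P := {w | ∃ R : ℕ, 0 < R ∧ ∀ x, w x ≤ ∑ r ∈ Finset.Icc 1 R, f (r ^ 2 * x)})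
    ?_ (fun r hr => ?_) hw
  · rintro u ⟨R, hR, hu⟩ v ⟨Q, hQ, hv⟩ a b ha hb hab
    refine ⟨max R Q, by positivity, fun x => ?_⟩
    have mono : ∀ R' ≤ max R Q, ∑ r ∈ Finset.Icc 1 R', f (r ^ 2 * x)
        ≤ ∑ r ∈ Finset.Icc 1 (max R Q), f (r ^ 2 * x) := fun R' h =>
      Finset.sum_le_sum_of_subset_of_nonneg (Finset.Icc_subset_Icc le_rfl h) fun i _ _ => (hf _).1
    have h1 := (hu x).trans (mono R (le_max_left _ _))
    have h2 := (hv x).trans (mono Q (le_max_right _ _))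
    simp only [Pi.add_apply, Pi.smul_apply, smul_eq_mul]
    have h3 := mul_le_mul_of_nonneg_left h1 ha
    have h4 := mul_le_mul_of_nonneg_left h2 hb
    have : ∀ s : ℝ, a * s + b * s = s := fun s => by rw [← add_mul, hab, one_mul]
    linarith [this (∑ r ∈ Finset.Icc 1 (max R Q), f (r ^ 2 * x))]
  · refine ⟨r, hr, fun x => ?_⟩
    exact Finset.single_le_sum (f := fun r => f (r ^ 2 * x)) (fun i _ => (hf _).1)
      (Finset.mem_Icc.2 ⟨hr, le_rfl⟩)

lemma exists_min (hM : IsMean M) {f : ℕ → ℝ} (hf : ∀ x, 0 ≤ f x ∧ f x ≤ 1) {η : ℝ} (hη : 0 < η) :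
    ∃ w ∈ convexHull ℝ (dil f), ∀ k : ℕ, 0 < k →
      M (fun x => (w (k ^ 2 * x) - w x) ^ 2) ≤ η := by
  let E : Set ℝ := (fun w : ℕ → ℝ => M (fun x => w x ^ 2)) '' convexHull ℝ (dil f)
  have hne : E.Nonempty := ⟨_, _, subset_convexHull ℝ _ ⟨1, one_pos, rfl⟩, rfl⟩
  have hbd : BddBelow E := by
    refine ⟨0, ?_⟩
    rintro _ ⟨w, hw, rfl⟩
    have hb := hull_bound hf hw
    exact hM.nonneg _ 1 (fun x => sq_nonneg _) (fun x => pow_le_one₀ (hb x).1 (hb x).2)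
  obtain ⟨_, ⟨w, hw, rfl⟩, hlt⟩ := exists_lt_of_csInf_lt hne
    (show sInf E < sInf E + η / 4 by linarith)
  refine ⟨w, hw, fun k hk => ?_⟩
  have hb := hull_bound hf hw
  have hk' := hull_dil hk hw
  set v : ℕ → ℝ := fun x => w (k ^ 2 * x) with hv
  have hmid : ((1 / 2 : ℝ) • w + (1 / 2 : ℝ) • v) ∈ convexHull ℝ (dil f) :=
    (convex_convexHull ℝ _) hw hk' (by norm_num) (by norm_num) (by norm_num)
  have h1 : sInf E ≤ M (fun x => ((1 / 2 : ℝ) • w + (1 / 2 : ℝ) • v) x ^ 2) :=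
    csInf_le hbd ⟨_, hmid, rfl⟩
  have h2 : M (fun x => v x ^ 2) = M (fun x => w x ^ 2) :=
    hM.inv (k ^ 2) (by positivity) (fun x => w x ^ 2) 1 (fun x => by
      rw [abs_of_nonneg (sq_nonneg _)]; exact pow_le_one₀ (hb x).1 (hb x).2)
  have e : (fun x => (v x - w x) ^ 2) = (2 : ℝ) • (fun x => v x ^ 2) + (2 : ℝ) • (fun x => w x ^ 2)
      - (4 : ℝ) • (fun x => ((1 / 2 : ℝ) • w + (1 / 2 : ℝ) • v) x ^ 2) := by
    ext x; simp; ring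
  change M (fun x => (v x - w x) ^ 2) ≤ η
  rw [e, map_sub, map_add, map_smul, map_smul, map_smul, h2]
  simp only [smul_eq_mul]
  change M (fun x => w x ^ 2) < _ at hlt
  linarith

lemma good_of_pair (hM : IsMean M) {f : ℕ → ℝ} (hf : ∀ x, 0 ≤ f x ∧ f x ≤ 1) {τ : ℝ} (hτ : 0 < τ)
    {w : ℕ → ℝ} (hw : w ∈ convexHull ℝ (dil f))
    (hmin : ∀ k : ℕ, 0 < k → M (fun x => (w (k ^ 2 * x) - w x) ^ 2) ≤ τ ^ 2)
    {d n : ℕ} (hd : 0 < d) (hn : 0 < n) {k : ℕ} (hk : 0 < k) :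
    M (fun x => w (d * (n + 1) * x) * w (d * n * x)) ≤
      M (fun x => f ((n ^ 2 + n) * x) * w (k ^ 2 * x)) + 3 * τ := by
  have hb := hull_bound hf hw
  have hwabs : ∀ x, |w x| ≤ 1 := fun x => abs_le.2 ⟨by linarith [hb x], (hb x).2⟩
  have hfabs : ∀ x, |f x| ≤ 1 := fun x => abs_le.2 ⟨by linarith [hf x], (hf x).2⟩
  have hdiff : ∀ x y, |w x - w y| ≤ 1 := fun x y =>
    abs_le.2 ⟨by linarith [hb x, hb y], by linarith [hb x, hb y]⟩
  have hprod : ∀ x y, |w x * w y| ≤ 1 := fun x y => by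
    rw [abs_mul]; exact mul_le_one₀ (hwabs x) (abs_nonneg _) (hwabs y)
  -- first shift
  have s1 : M (fun x => w (d * (n + 1) * x) * w (d * n * x)) =
      M (fun x => w (d * (n + 1) * (d * n * x)) * w ((d * n) ^ 2 * x)) := by
    rw [← hM.inv (d * n) (by positivity) (fun x => w (d * (n + 1) * x) * w (d * n * x)) 1
      (fun x => hprod _ _)]
    congr 1; ext x
    rw [show d * n * (d * n * x) = (d * n) ^ 2 * x by ring]
  have s2 : M (fun x => w (d * (n + 1) * (d * n * x)) * w ((d * n) ^ 2 * x)) ≤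
      M (fun x => w (d * (n + 1) * (d * n * x)) * w x) + τ := by
    have := mean_cs hM hτ (u := fun x => w (d * (n + 1) * (d * n * x)))
      (v := fun x => w ((d * n) ^ 2 * x) - w x) (fun x => hwabs _) (fun x => hdiff _ _)
      (hmin (d * n) (by positivity))
    have e : (fun x => w (d * (n + 1) * (d * n * x)) * (w ((d * n) ^ 2 * x) - w x)) =
      (fun x => w (d * (n + 1) * (d * n * x)) * w ((d * n) ^ 2 * x)) -
      (fun x => w (d * (n + 1) * (d * n * x)) * w x) := by ext x; simp; ring
    rw [e, map_sub] at this
    linarith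
  have s3 : M (fun x => w (d * (n + 1) * (d * n * x)) * w x) ≤
      M (fun x => w ((n ^ 2 + n) * x) * w x) + τ := by
    have hinv := hM.inv (n ^ 2 + n) (by positivity) (fun x => (w (d ^ 2 * x) - w x) ^ 2) 1
      (fun x => by rw [abs_pow]; exact pow_le_one₀ (abs_nonneg _) (hdiff _ _))
    have := mean_cs hM hτ (u := fun x => w x)
      (v := fun x => w (d ^ 2 * ((n ^ 2 + n) * x)) - w ((n ^ 2 + n) * x)) (fun x => hwabs _)
      (fun x => hdiff _ _) (by rw [hinv]; exact hmin d hd)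
    have e : (fun x => w x * (w (d ^ 2 * ((n ^ 2 + n) * x)) - w ((n ^ 2 + n) * x))) =
      (fun x => w (d * (n + 1) * (d * n * x)) * w x) -
      (fun x => w ((n ^ 2 + n) * x) * w x) := by
      ext x
      simp only [Pi.sub_apply]
      rw [show d * (n + 1) * (d * n * x) = d ^ 2 * ((n ^ 2 + n) * x) by ring]
      ring
    rw [e, map_sub] at this
    linarith
  have s4 : M (fun x => w ((n ^ 2 + n) * x) * w x) ≤
      M (fun x => f ((n ^ 2 + n) * x) * w (k ^ 2 * x)) + τ := by
    refine hull_ind (P := {w' | M (fun x => w' ((n ^ 2 + n) * x) * w x) ≤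
      M (fun x => f ((n ^ 2 + n) * x) * w (k ^ 2 * x)) + τ}) ?_ (fun r hr => ?_) hw
    · refine convex_halfSpace_le (f := fun w' : ℕ → ℝ => M (fun x => w' ((n ^ 2 + n) * x) * w x))
        ⟨fun u v => ?_, fun c u => ?_⟩ _
      · rw [← map_add]; congr 1; ext x; simp [add_mul]
      · rw [← map_smul]; congr 1; ext x; simp [mul_assoc]
    · have hinv := hM.inv (r ^ 2) (by positivity)
        (fun x => f ((n ^ 2 + n) * x) * w (k ^ 2 * x)) 1
        (fun x => by rw [abs_mul]; exact mul_le_one₀ (hfabs _) (abs_nonneg _) (hwabs _))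
      have := mean_cs hM hτ (u := fun x => -f (r ^ 2 * ((n ^ 2 + n) * x)))
        (v := fun x => w ((r * k) ^ 2 * x) - w x) (fun x => by rw [abs_neg]; exact hfabs _)
        (fun x => hdiff _ _) (hmin (r * k) (by positivity))
      have e : (fun x => -f (r ^ 2 * ((n ^ 2 + n) * x)) * (w ((r * k) ^ 2 * x) - w x)) =
        (fun x => f (r ^ 2 * ((n ^ 2 + n) * x)) * w x) -
        (fun x => f ((n ^ 2 + n) * (r ^ 2 * x)) * w (k ^ 2 * (r ^ 2 * x))) := by
        ext x
        simp only [Pi.sub_apply]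
        rw [show (n ^ 2 + n) * (r ^ 2 * x) = r ^ 2 * ((n ^ 2 + n) * x) by ring,
          show k ^ 2 * (r ^ 2 * x) = (r * k) ^ 2 * x by ring]
        ring
      rw [e, map_sub, hinv] at this
      change M (fun x => f (r ^ 2 * ((n ^ 2 + n) * x)) * w x) ≤ _
      linarith
  linarith

lemma exists_pair (hM : IsMean M) {w : ℕ → ℝ} (hb : ∀ x, 0 ≤ w x ∧ w x ≤ 1)
    {S : Finset ℕ} (hpos : ∀ a ∈ S, 0 < a) {δ : ℝ} (hδ : M w = δ)
    (hK : 2 < S.card * δ ^ 2) :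
    ∃ a ∈ S, ∃ b ∈ S, b < a ∧ δ ^ 2 / 2 ≤ M (fun x => w (a * x) * w (b * x)) := by
  by_contra! hcon
  have hwabs : ∀ x, |w x| ≤ 1 := fun x => abs_le.2 ⟨by linarith [hb x], (hb x).2⟩
  have h1 := mean_sq hM (u := ∑ a ∈ S, fun x => w (a * x)) (B := S.card) (fun x => by
    rw [Finset.sum_apply]
    refine (Finset.abs_sum_le_sum_abs _ _).trans ?_
    refine (Finset.sum_le_sum fun a _ => hwabs _).trans (by simp))
  have h2 : M (∑ a ∈ S, fun x => w (a * x)) = S.card * δ := by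
    rw [map_sum, Finset.sum_congr rfl (fun a ha => hM.inv a (hpos a ha) w 1 hwabs), hδ]
    simp
  have e : (fun x => (∑ a ∈ S, fun x => w (a * x)) x ^ 2) =
      ∑ a ∈ S, ∑ b ∈ S, fun x => w (a * x) * w (b * x) := by
    ext x
    simp only [Finset.sum_apply]
    rw [sq, Finset.sum_mul_sum]
  rw [h2, e, map_sum] at h1
  have h3 : ∀ a ∈ S, ∀ b ∈ S, M (fun x => w (a * x) * w (b * x)) ≤
      (if a = b then 1 else 0) + δ ^ 2 / 2 := by
    intro a ha b hb'
    rcases lt_trichotomy a b with h | h | h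
    · rw [if_neg h.ne]
      have := hcon b hb' a ha h
      simp only [mul_comm (w (b * _))] at this
      linarith
    · subst h
      have : M (fun x => w (a * x) * w (a * x)) ≤ M (fun _ => 1) :=
        mean_mono hM 1 (fun x => mul_le_one₀ (hb _).2 (hb _).1 (hb _).2)
          (fun x => by nlinarith [hb (a * x)])
      rw [hM.one] at this
      simp only [if_true]
      linarith [sq_nonneg δ]
    · rw [if_neg h.ne']
      have := hcon a ha b hb' h
      linarith
  have h4 : ∑ a ∈ S, M (∑ b ∈ S, fun x => w (a * x) * w (b * x)) ≤
      S.card + S.card * (S.card * (δ ^ 2 / 2)) := by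
    calc _ ≤ ∑ a ∈ S, (1 + S.card * (δ ^ 2 / 2)) := by
          refine Finset.sum_le_sum fun a ha => ?_
          rw [map_sum]
          refine (Finset.sum_le_sum fun b hb => h3 a ha b hb).trans ?_
          rw [Finset.sum_add_distrib, Finset.sum_ite_eq, if_pos ha]
          simp
      _ = _ := by simp [mul_add]
  have hc : (0 : ℝ) < S.card := by
    rcases Nat.eq_zero_or_pos S.card with h | h
    · rw [h] at hK; norm_num at hK
    · exact_mod_cast h
  nlinarith
end

/-- harmonic sum -/
noncomputable def H (n : ℕ) : ℝ := ∑ k ∈ Finset.Icc 1 n, (1 / (k : ℝ))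

lemma H_eq (n : ℕ) : H n = (harmonic n : ℝ) := by
  rw [harmonic_eq_sum_Icc, H]; push_cast; simp

lemma H_lower (R : ℕ) (hR : 0 < R) : ∀ᶠ N : ℕ in atTop, Real.log N / 2 ≤ H (N / R) := by
  filter_upwards [eventually_ge_atTop (R ^ 2)] with N hN
  have hN0 : 0 < N := lt_of_lt_of_le (by positivity) hN
  have h1 := log_add_one_le_harmonic (N / R)
  rw [H_eq]
  refine le_trans ?_ h1
  have h2 : (N : ℝ) / R ≤ ((N / R : ℕ) : ℝ) + 1 := by
    rw [div_le_iff₀ (by exact_mod_cast hR)]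
    have := Nat.lt_mul_div_succ N hR
    have h3 : N ≤ (N / R + 1) * R := by rw [mul_comm]; exact this.le
    exact_mod_cast h3
  have hRr : (0 : ℝ) < R := by exact_mod_cast hR
  have hNr : (0 : ℝ) < N := by exact_mod_cast hN0
  have h3 := Real.log_le_log (by positivity) h2
  rw [Real.log_div hNr.ne' hRr.ne'] at h3
  have h4 : Real.log ((R : ℝ) ^ 2) ≤ Real.log N :=
    Real.log_le_log (by positivity) (by exact_mod_cast hN)
  rw [Real.log_pow] at h4
  push_cast at h3 h4 ⊢
  linarith

/-- sum over `m` -/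
lemma sum_m_lower {D : ℕ → ℝ} (hD : ∀ m, 0 ≤ D m) {R : ℕ} (hR : 0 < R) {c : ℝ}
    (h : ∀ k, 0 < k → c ≤ ∑ r ∈ Finset.Icc 1 R, D (r * k)) (N : ℕ) :
    c / R ^ 2 * H (N / R) ≤ ∑ m ∈ Finset.Icc 1 N, D m / m := by
  have hRr : (0 : ℝ) < R := by exact_mod_cast hR
  set T := ∑ m ∈ Finset.Icc 1 N, D m / m with hT
  have h1 : ∀ r ∈ Finset.Icc 1 R, ∑ k ∈ Finset.Icc 1 (N / R), D (r * k) / (R * k) ≤ T := by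
    intro r hr
    rw [Finset.mem_Icc] at hr
    have hinj : Set.InjOn (fun k => r * k) (Finset.Icc 1 (N / R) : Set ℕ) :=
      fun x _ y _ hxy => Nat.eq_of_mul_eq_mul_left hr.1 hxy
    calc _ ≤ ∑ k ∈ Finset.Icc 1 (N / R), D (r * k) / ((r * k : ℕ) : ℝ) := by
          refine Finset.sum_le_sum fun k hk => ?_
          rw [Finset.mem_Icc] at hk
          have hk0 : (0 : ℝ) < k := by exact_mod_cast hk.1
          have hr0 : (0 : ℝ) < r := by exact_mod_cast hr.1
          push_cast
          refine div_le_div_of_nonneg_left (hD _) (by positivity) ?_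
          exact mul_le_mul_of_nonneg_right (by exact_mod_cast hr.2) hk0.le
      _ = ∑ m ∈ (Finset.Icc 1 (N / R)).image (fun k => r * k), D m / (m : ℝ) := by
          rw [Finset.sum_image hinj]
      _ ≤ T := by
          refine Finset.sum_le_sum_of_subset_of_nonneg ?_ fun m _ _ =>
            div_nonneg (hD _) (Nat.cast_nonneg _)
          intro m hm
          obtain ⟨k, hk, rfl⟩ := Finset.mem_image.1 hm
          rw [Finset.mem_Icc] at hk ⊢
          refine ⟨Nat.mul_pos hr.1 hk.1, ?_⟩
          exact (Nat.mul_le_mul hr.2 hk.2).trans (Nat.mul_div_le N R)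
  have h2 := Finset.sum_le_sum h1
  rw [Finset.sum_comm] at h2
  simp only [Finset.sum_const, Nat.card_Icc, Nat.add_sub_cancel, nsmul_eq_mul] at h2
  have h3 : c / R * H (N / R) ≤ R * T := by
    refine le_trans ?_ h2
    rw [H, Finset.mul_sum]
    refine Finset.sum_le_sum fun k hk => ?_
    rw [Finset.mem_Icc] at hk
    have hk0 : (0 : ℝ) < k := by exact_mod_cast hk.1
    rw [← Finset.sum_div, div_mul_div_comm, mul_one]
    exact div_le_div_of_nonneg_right (h k hk.1) (by positivity)
  have : c / R ^ 2 * H (N / R) = (c / R * H (N / R)) / R := by field_simp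
  rw [this, div_le_iff₀ hRr]
  linarith

open scoped Classical in
/-- sum over `n` -/
lemma sum_n_lower {G : Set ℕ} {S : Finset ℕ} {P : ℕ} (hP : 0 < P) {C : ℕ} (hC : 0 < C)
    (hS : S.Nonempty)
    (h : ∀ t, 0 < t → ∃ a ∈ S, ∃ b ∈ S, ∃ n, 0 < n ∧ n ≤ C * t ∧ b < a ∧ (a - b) * n = b + P * t ∧
      n ∈ G) (N : ℕ) :
    1 / (C * S.card ^ 2) * H (N / C) ≤ ∑ n ∈ (Finset.Icc 1 N).filter (· ∈ G), (1 / (n : ℝ)) := by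
  have hCr : (0 : ℝ) < C := by exact_mod_cast hC
  have hSc : (0 : ℝ) < S.card := by exact_mod_cast hS.card_pos
  choose! a ha b hb n hn hnC hab heq hG using h
  set T := ∑ n ∈ (Finset.Icc 1 N).filter (· ∈ G), (1 / (n : ℝ)) with hT
  set I := Finset.Icc 1 (N / C) with hI
  have hmaps : ∀ t ∈ I, (a t, b t) ∈ S ×ˢ S := fun t ht => by
    have := (Finset.mem_Icc.1 ht).1
    exact Finset.mem_product.2 ⟨ha t this, hb t this⟩
  have h1 : ∀ p ∈ S ×ˢ S, ∑ t ∈ I.filter (fun t => (a t, b t) = p), 1 / (n t : ℝ) ≤ T := by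
    intro p hp
    have hinj : Set.InjOn n (I.filter (fun t => (a t, b t) = p) : Set ℕ) := by
      intro x hx y hy hxy
      simp only [Finset.coe_filter, Set.mem_ofPred_eq] at hx hy
      have hx1 := heq x (Finset.mem_Icc.1 hx.1).1
      have hy1 := heq y (Finset.mem_Icc.1 hy.1).1
      have e : (a x, b x) = (a y, b y) := hx.2.trans hy.2.symm
      rw [Prod.mk.injEq] at e
      rw [e.1, e.2, hxy, hy1] at hx1
      exact (Nat.eq_of_mul_eq_mul_left hP (Nat.add_left_cancel hx1)).symm
    rw [← Finset.sum_image (f := fun m : ℕ => 1 / (m : ℝ)) hinj]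
    refine Finset.sum_le_sum_of_subset_of_nonneg ?_ fun m _ _ => by positivity
    intro m hm
    obtain ⟨t, ht, rfl⟩ := Finset.mem_image.1 hm
    have ht' := Finset.mem_Icc.1 (Finset.mem_filter.1 ht).1
    refine Finset.mem_filter.2 ⟨Finset.mem_Icc.2 ⟨hn t ht'.1, ?_⟩, hG t ht'.1⟩
    exact (hnC t ht'.1).trans ((Nat.mul_le_mul_left C ht'.2).trans (Nat.mul_div_le N C))
  have h2 := Finset.sum_le_sum h1
  rw [Finset.sum_fiberwise_of_maps_to hmaps] at h2
  simp only [Finset.sum_const, Finset.card_product, nsmul_eq_mul] at h2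
  have h3 : 1 / C * H (N / C) ≤ ∑ t ∈ I, 1 / (n t : ℝ) := by
    rw [H, Finset.mul_sum]
    refine Finset.sum_le_sum fun t ht => ?_
    have ht' := (Finset.mem_Icc.1 ht).1
    rw [div_mul_div_comm, mul_one]
    have : (0 : ℝ) < n t := by exact_mod_cast hn t ht'
    exact one_div_le_one_div_of_le this (by exact_mod_cast hnC t ht')
  have : 1 / (C * (S.card : ℝ) ^ 2) * H (N / C) = (1 / C * H (N / C)) / (S.card ^ 2) := by field_simp
  rw [this, div_le_iff₀ (by positivity)]
  push_cast at h2
  nlinarith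

lemma main_lower {M : (ℕ → ℝ) →ₗ[ℝ] ℝ} (hM : IsMean M) {f : ℕ → ℝ}
    (hf : ∀ x, 0 ≤ f x ∧ f x ≤ 1) (hδ : 0 < M f) :
    ∃ c : ℝ, 0 < c ∧ ∀ᶠ N : ℕ in atTop, c * Real.log N ^ 2 ≤
      ∑ n ∈ Finset.Icc 1 N, ∑ m ∈ Finset.Icc 1 N,
        M (fun x => f ((n ^ 2 + n) * x) * f (m ^ 2 * x)) / m * (1 / (n : ℝ)) := by
  classical
  set δ := M f with hδd
  set τ := δ ^ 2 / 12 with hτd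
  have hτ : 0 < τ := by positivity
  obtain ⟨w, hw, hmin⟩ := exists_min hM hf (show 0 < τ ^ 2 by positivity)
  have hb := hull_bound hf hw
  have hMw := hull_mean hM hf hw
  obtain ⟨R, hR, hwR⟩ := hull_le hf hw
  obtain ⟨K, hK⟩ := exists_nat_gt (2 / δ ^ 2)
  obtain ⟨S, hSc, hSp, hSd⟩ := exists_diff_set K
  have hK' : 2 < (K : ℝ) * δ ^ 2 := by rwa [div_lt_iff₀ (by positivity)] at hK
  have hSne : S.Nonempty := by
    rw [← Finset.card_pos, hSc]
    rcases Nat.eq_zero_or_pos K with h | h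
    · rw [h] at hK'; norm_num at hK'
    · exact h
  set D : ℕ → ℕ → ℝ := fun n m => M (fun x => f ((n ^ 2 + n) * x) * f (m ^ 2 * x)) with hD
  have hD0 : ∀ n m, 0 ≤ D n m := fun n m =>
    hM.nonneg _ 1 (fun x => mul_nonneg (hf _).1 (hf _).1)
      (fun x => mul_le_one₀ (hf _).2 (hf _).1 (hf _).2)
  set c := δ ^ 2 / 4 with hc
  set G : Set ℕ := {n | ∀ k, 0 < k → c ≤ ∑ r ∈ Finset.Icc 1 R, D n (r * k)} with hG
  set mx := S.sup id with hmx
  have hle : ∀ a ∈ S, a ≤ mx := fun a ha => Finset.le_sup (f := id) ha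
  set P := mx.factorial with hPd
  have hP : 0 < P := Nat.factorial_pos mx
  have hgood : ∀ t, 0 < t → ∃ a ∈ S, ∃ b ∈ S, ∃ n, 0 < n ∧ n ≤ (mx + P) * t ∧ b < a ∧
      (a - b) * n = b + P * t ∧ n ∈ G := by
    intro t ht
    obtain ⟨a', ha', b', hb', hab', hpair⟩ := exists_pair hM hb
      (S := S.image (fun s => s + P * t)) (by
        intro a ha
        obtain ⟨s, hs, rfl⟩ := Finset.mem_image.1 ha
        have := hSp s hs
        omega) hMw (by
        rw [Finset.card_image_of_injective _ (add_left_injective _), hSc]; exact hK')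
    obtain ⟨a, ha, rfl⟩ := Finset.mem_image.1 ha'
    obtain ⟨b, hbS, rfl⟩ := Finset.mem_image.1 hb'
    have hab : b < a := by omega
    have hd : 0 < a - b := by omega
    have hdP : (a - b) ∣ P := Nat.dvd_factorial hd ((Nat.sub_le _ _).trans (hle a ha))
    obtain ⟨n, hn⟩ : (a - b) ∣ b + P * t := dvd_add (hSd a ha b hbS hab) (dvd_mul_of_dvd_left hdP t)
    have hbpos := hSp b hbS
    have hn0 : 0 < n := by
      rcases Nat.eq_zero_or_pos n with h | h
      · rw [h] at hn; simp at hn; omega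
      · exact h
    refine ⟨a, ha, b, hbS, n, hn0, ?_, hab, hn.symm, ?_⟩
    · have h1 : n ≤ (a - b) * n := Nat.le_mul_of_pos_left n hd
      have h2 : b ≤ mx * t := (hle b hbS).trans (Nat.le_mul_of_pos_right mx ht)
      rw [add_mul]; omega
    · intro k hk
      have e1 : b + P * t = (a - b) * n := hn
      have e2 : a + P * t = (a - b) * (n + 1) := by rw [mul_add, ← hn]; omega
      rw [e1, e2] at hpair
      have h1 := good_of_pair hM hf hτ hw hmin hd hn0 hk
      have h2 : M (fun x => f ((n ^ 2 + n) * x) * w (k ^ 2 * x)) ≤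
          M (∑ r ∈ Finset.Icc 1 R, fun x => f ((n ^ 2 + n) * x) * f ((r * k) ^ 2 * x)) := by
        have e : ∀ x, (∑ r ∈ Finset.Icc 1 R, fun x => f ((n ^ 2 + n) * x) * f ((r * k) ^ 2 * x)) x
            = f ((n ^ 2 + n) * x) * ∑ r ∈ Finset.Icc 1 R, f (r ^ 2 * (k ^ 2 * x)) := by
          intro x
          rw [Finset.sum_apply, Finset.mul_sum]
          refine Finset.sum_congr rfl fun r _ => ?_
          rw [show (r * k) ^ 2 * x = r ^ 2 * (k ^ 2 * x) by ring]
        refine mean_mono hM R (fun x => ?_) (fun x => ?_)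
        · rw [e]
          exact mul_le_mul_of_nonneg_left (hwR _) (hf _).1
        · rw [e]
          have h3 : ∑ r ∈ Finset.Icc 1 R, f (r ^ 2 * (k ^ 2 * x)) ≤ R :=
            (Finset.sum_le_sum fun r _ => (hf _).2).trans (by simp)
          have h4 := mul_nonneg (hf ((n ^ 2 + n) * x)).1 (hb (k ^ 2 * x)).1
          have h5 : f ((n ^ 2 + n) * x) * ∑ r ∈ Finset.Icc 1 R, f (r ^ 2 * (k ^ 2 * x)) ≤ 1 * R :=
            mul_le_mul (hf _).2 h3 (Finset.sum_nonneg fun r _ => (hf _).1) zero_le_one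
          linarith
      rw [map_sum] at h2
      change c ≤ ∑ r ∈ Finset.Icc 1 R, M (fun x => f ((n ^ 2 + n) * x) * f ((r * k) ^ 2 * x))
      linarith
  have hC : 0 < mx + P := by omega
  have hn := sum_n_lower hP hC hSne hgood
  have hm : ∀ n ∈ G, ∀ N, _ := fun n hn N => sum_m_lower (hD0 n) hR hn N
  have hSr : (0 : ℝ) < S.card := by exact_mod_cast hSne.card_pos
  have hCr : (0 : ℝ) < ((mx + P : ℕ) : ℝ) := by exact_mod_cast hC
  have hRr : (0 : ℝ) < R := by exact_mod_cast hR
  have hc0 : 0 < c := by positivity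
  refine ⟨(c / R ^ 2) * (1 / (((mx + P : ℕ) : ℝ) * S.card ^ 2)) / 4, by positivity, ?_⟩
  filter_upwards [H_lower R hR, H_lower (mx + P) hC, eventually_ge_atTop 1] with N h1 h2 hN1
  have hlog : 0 ≤ Real.log N := Real.log_nonneg (by exact_mod_cast hN1)
  calc _ = (c / R ^ 2 * (Real.log N / 2)) *
        (1 / (((mx + P : ℕ) : ℝ) * S.card ^ 2) * (Real.log N / 2)) := by ring
    _ ≤ (c / R ^ 2 * H (N / R)) * (1 / (((mx + P : ℕ) : ℝ) * S.card ^ 2) * H (N / (mx + P))) := by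
        have hH : 0 ≤ H (N / R) := by linarith
        gcongr
    _ ≤ (c / R ^ 2 * H (N / R)) * ∑ n ∈ (Finset.Icc 1 N).filter (· ∈ G), (1 / (n : ℝ)) := by
        refine mul_le_mul_of_nonneg_left (hn N) (mul_nonneg (by positivity) ?_)
        linarith
    _ = ∑ n ∈ (Finset.Icc 1 N).filter (· ∈ G), (c / R ^ 2 * H (N / R)) * (1 / (n : ℝ)) := by
        rw [Finset.mul_sum]
    _ ≤ ∑ n ∈ (Finset.Icc 1 N).filter (· ∈ G), (∑ m ∈ Finset.Icc 1 N, D n m / m) * (1 / (n : ℝ)) := by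
        refine Finset.sum_le_sum fun n hn => ?_
        exact mul_le_mul_of_nonneg_right (hm n (Finset.mem_filter.1 hn).2 N) (by positivity)
    _ ≤ ∑ n ∈ Finset.Icc 1 N, (∑ m ∈ Finset.Icc 1 N, D n m / m) * (1 / (n : ℝ)) := by
        refine Finset.sum_le_sum_of_subset_of_nonneg (Finset.filter_subset _ _) fun n _ _ => ?_
        exact mul_nonneg (Finset.sum_nonneg fun m _ => div_nonneg (hD0 n m) (Nat.cast_nonneg _))
          (by positivity)
    _ = _ := by
        refine Finset.sum_congr rfl fun n _ => ?_
        rw [Finset.sum_mul]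

end LogAvg

/-- **Theorem 1.9.** If `Λ` has positive upper multiplicative density with respect to a
multiplicative Følner sequence `Φ`, then
`liminf_{N→∞} (1/(log N)²) ∑_{m,n ≤ N} (1/(mn)) d̄_Φ((n² + n)⁻¹Λ ∩ (m²)⁻¹Λ) > 0`. -/
theorem logarithmic_average_density_positive
    (Λ : Set ℕ) (hΛpos : ∀ n ∈ Λ, 0 < n)
    (Φ : ℕ → Finset ℕ) (hΦ : IsMulFolner Φ) (hdens : 0 < upMulDens Φ Λ) :
    0 < liminf (fun N : ℕ =>
      (1 / (Real.log N) ^ 2) * ∑ m ∈ Finset.Icc 1 N, ∑ n ∈ Finset.Icc 1 N,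
        (1 / ((m : ℝ) * (n : ℝ))) *
          upMulDens Φ ({x : ℕ | (n ^ 2 + n) * x ∈ Λ} ∩ {x : ℕ | m ^ 2 * x ∈ Λ})) atTop := by
  classical
  obtain ⟨M, hM, hpos, hle⟩ := LogAvg.exists_mean hΦ Λ hdens
  have hf : ∀ x, 0 ≤ Λ.indicator (1 : ℕ → ℝ) x ∧ Λ.indicator (1 : ℕ → ℝ) x ≤ 1 := by
    intro x
    by_cases hx : x ∈ Λ <;> simp [hx]
  obtain ⟨c, hc, hlow⟩ := LogAvg.main_lower hM hf hpos
  refine lt_of_lt_of_le hc (le_liminf_of_le ?_ ?_)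
  · refine IsBoundedUnder.isCoboundedUnder_ge (isBoundedUnder_of_eventually_le (a := 4) ?_)
    filter_upwards [eventually_ge_atTop 3] with N hN
    have hlog : 1 ≤ Real.log N := by
      rw [Real.le_log_iff_exp_le (by positivity)]
      have : (3 : ℝ) ≤ N := by exact_mod_cast hN
      linarith [Real.exp_one_lt_d9]
    have h1 : ∑ m ∈ Finset.Icc 1 N, ∑ n ∈ Finset.Icc 1 N, (1 / ((m : ℝ) * (n : ℝ))) *
          upMulDens Φ ({x : ℕ | (n ^ 2 + n) * x ∈ Λ} ∩ {x : ℕ | m ^ 2 * x ∈ Λ}) ≤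
          LogAvg.H N * LogAvg.H N := by
      rw [LogAvg.H, Finset.sum_mul_sum]
      refine Finset.sum_le_sum fun m _ => Finset.sum_le_sum fun n _ => ?_
      rw [div_mul_div_comm, one_mul]
      exact mul_le_of_le_one_right (by positivity) (LogAvg.upMulDens_nonneg_le _)
    have h2 : LogAvg.H N ≤ 2 * Real.log N := by
      rw [LogAvg.H_eq]
      linarith [harmonic_le_one_add_log N]
    have h0 : 0 ≤ LogAvg.H N := Finset.sum_nonneg fun k _ => by positivity
    rw [one_div, inv_mul_le_iff₀ (by positivity)]
    nlinarith
  · filter_upwards [hlow, eventually_ge_atTop 3] with N h hN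
    have hlog : 0 < Real.log N := Real.log_pos (by exact_mod_cast (by omega : 1 < N))
    rw [one_div, le_inv_mul_iff₀ (by positivity), mul_comm]
    refine h.trans ?_
    rw [Finset.sum_comm]
    refine Finset.sum_le_sum fun m _ => Finset.sum_le_sum fun n _ => ?_
    have e : (fun x => Λ.indicator (1 : ℕ → ℝ) ((n ^ 2 + n) * x) * Λ.indicator 1 (m ^ 2 * x)) =
        ({x : ℕ | (n ^ 2 + n) * x ∈ Λ} ∩ {x : ℕ | m ^ 2 * x ∈ Λ}).indicator 1 := by
      ext x
      by_cases h1 : (n ^ 2 + n) * x ∈ Λ <;> by_cases h2 : m ^ 2 * x ∈ Λ <;>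
        simp [Set.indicator_apply, h1, h2]
    rw [e, div_mul_div_comm, mul_one, div_eq_mul_one_div, mul_comm]
    exact mul_le_mul_of_nonneg_left (hle _) (by positivity)
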